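/- Let R be a subring of ℝ containing ℤ, let G be a group, H ≤ G a subgroup, and W a normed R-module. Then there is an R[H]-module isomorphism ℓ∞(G,W) ≅ ℓ∞(H, ℓ∞(H\G, W)), where H\G denotes the set of right cosets Hg, the module ℓ∞(H\G,W) of bounded functions H\G → W is given the supremum norm and the trivial H-action, and H acts on ℓ∞(G,W) and on ℓ∞(H,−) by left translation. -/

import Mathlib

/-!
Choosing a representative `s(c)` of every right coset `c ∈ H\G` gives a bijection
`H × H\G ≃ G`, `(h, c) ↦ h * s(c)`, that commutes with left multiplication by `H`
(`cosetDecomp`). Pulling functions back along it and currying turns `f : G → W` into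
`h ↦ (c ↦ f (h * s(c)))`. A function is bounded on a product exactly when its slices are bounded
and their supremum norms are uniformly bounded (`nrm_le_supNorm`, `supNorm_le`), so this restricts
to the required isomorphism; equivariance is associativity of multiplication in `G`.
-/

set_option synthInstance.maxHeartbeats 1000000
set_option maxHeartbeats 1000000

noncomputable section

/-- A norm on a module `V` over a subring `Q ≤ ℝ`, in the sense of the paper. -/
structure ModuleNorm (Q : Subring ℝ) (V : Type) [AddCommGroup V] [Module Q V] where
  nrm : V → ℝ
  nonneg : ∀ v, 0 ≤ nrm v
  eq_zero : ∀ v, nrm v = 0 → v = 0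
  add_le : ∀ v w, nrm (v + w) ≤ nrm v + nrm w
  smul_le : ∀ (r : Q) (v : V), nrm (r • v) ≤ |(r : ℝ)| * nrm v

variable {Q : Subring ℝ} {V : Type} [AddCommGroup V] [Module Q V]

/-- `ℓ∞(S, V)`: the `Q`-submodule of functions `S → V` with bounded image. -/
def boundedFns (N : ModuleNorm Q V) (S : Type) : Submodule Q (S → V) where
  carrier := {f | ∃ C : ℝ, ∀ s, N.nrm (f s) ≤ C}
  add_mem' := by
    rintro f g ⟨C, hC⟩ ⟨D, hD⟩
    exact ⟨C + D, fun s => (N.add_le _ _).trans (add_le_add (hC s) (hD s))⟩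
  zero_mem' := ⟨N.nrm 0, fun _ => le_rfl⟩
  smul_mem' := by
    rintro r f ⟨C, hC⟩
    refine ⟨|(r : ℝ)| * C, fun s => (N.smul_le r (f s)).trans ?_⟩
    exact mul_le_mul_of_nonneg_left (hC s) (abs_nonneg _)

/-- The supremum norm on `ℓ∞(S, V)`, making it a normed module. -/
def supNorm (N : ModuleNorm Q V) (S : Type) : ModuleNorm Q (boundedFns N S) where
  nrm f := sSup (Set.range fun s => N.nrm ((f : S → V) s))
  nonneg f := Real.sSup_nonneg (by rintro x ⟨s, rfl⟩; exact N.nonneg _)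
  eq_zero := by
    intro f hf
    have hbdd : BddAbove (Set.range fun s => N.nrm ((f : S → V) s)) := by
      obtain ⟨C, hC⟩ := f.2
      exact ⟨C, by rintro x ⟨s, rfl⟩; exact hC s⟩
    ext s
    refine N.eq_zero _ (le_antisymm ?_ (N.nonneg _))
    calc N.nrm ((f : S → V) s) ≤ _ := le_csSup hbdd ⟨s, rfl⟩
      _ = 0 := hf
  add_le := by
    intro f g
    have hbf : BddAbove (Set.range fun s => N.nrm ((f : S → V) s)) := by
      obtain ⟨C, hC⟩ := f.2
      exact ⟨C, by rintro x ⟨s, rfl⟩; exact hC s⟩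
    have hbg : BddAbove (Set.range fun s => N.nrm ((g : S → V) s)) := by
      obtain ⟨C, hC⟩ := g.2
      exact ⟨C, by rintro x ⟨s, rfl⟩; exact hC s⟩
    refine Real.sSup_le ?_ (add_nonneg
      (Real.sSup_nonneg (by rintro x ⟨s, rfl⟩; exact N.nonneg _))
      (Real.sSup_nonneg (by rintro x ⟨s, rfl⟩; exact N.nonneg _)))
    rintro x ⟨s, rfl⟩
    exact (N.add_le _ _).trans (add_le_add (le_csSup hbf ⟨s, rfl⟩) (le_csSup hbg ⟨s, rfl⟩))
  smul_le := by
    intro r f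
    have hbf : BddAbove (Set.range fun s => N.nrm ((f : S → V) s)) := by
      obtain ⟨C, hC⟩ := f.2
      exact ⟨C, by rintro x ⟨s, rfl⟩; exact hC s⟩
    refine Real.sSup_le ?_ (mul_nonneg (abs_nonneg _)
      (Real.sSup_nonneg (by rintro x ⟨s, rfl⟩; exact N.nonneg _)))
    rintro x ⟨s, rfl⟩
    exact (N.smul_le _ _).trans
      (mul_le_mul_of_nonneg_left (le_csSup hbf ⟨s, rfl⟩) (abs_nonneg _))

/-- Left translation of `h ∈ H ≤ G` on `ℓ∞(G, V)`: `(h • f) x = f (h⁻¹ * x)`. -/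
def lTranslateSub {G : Type} [Group G] {H : Subgroup G} (N : ModuleNorm Q V) (h : H)
    (f : boundedFns N G) : boundedFns N G :=
  ⟨fun x => (f : G → V) ((h : G)⁻¹ * x), by
    obtain ⟨C, hC⟩ := f.2; exact ⟨C, fun s => hC _⟩⟩

/-- Left translation of `k ∈ K` on `ℓ∞(K, V)`: `(k • f) x = f (k⁻¹ * x)`. -/
def lTranslate {K : Type} [Group K] (N : ModuleNorm Q V) (k : K)
    (f : boundedFns N K) : boundedFns N K :=
  ⟨fun x => (f : K → V) (k⁻¹ * x), by
    obtain ⟨C, hC⟩ := f.2; exact ⟨C, fun s => hC _⟩⟩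

/-- The bijection `H × H\G ≃ G`, `(h, c) ↦ h * s(c)`, where `s(c)` is the representative
`Quotient.out c` of the right coset `c`. -/
def cosetDecomp {G : Type} [Group G] (H : Subgroup G) :
    H × Quotient (QuotientGroup.rightRel H) ≃ G where
  toFun p := (p.1 : G) * p.2.out
  invFun x := (⟨x * (Quotient.mk (QuotientGroup.rightRel H) x).out⁻¹,
    QuotientGroup.rightRel_apply.1 (Quotient.mk_out (s := QuotientGroup.rightRel H) x)⟩,
    Quotient.mk _ x)
  left_inv := by
    rintro ⟨h, c⟩
    have hc : Quotient.mk (QuotientGroup.rightRel H) ((h : G) * c.out) = c := by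
      conv_rhs => rw [← Quotient.out_eq c]
      refine Quotient.sound (QuotientGroup.rightRel_apply.2 ?_)
      simp
    refine Prod.ext (Subtype.ext ?_) hc
    simp only [hc]
    group
  right_inv x := by simp

theorem nrm_le_supNorm (N : ModuleNorm Q V) {S : Type} (f : boundedFns N S) (s : S) :
    N.nrm ((f : S → V) s) ≤ (supNorm N S).nrm f := by
  obtain ⟨C, hC⟩ := f.2
  exact le_csSup ⟨C, by rintro x ⟨t, rfl⟩; exact hC t⟩ ⟨s, rfl⟩

/-- Nonnegativity of `C` is only needed for empty `S`, where the supremum is `0`. -/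
theorem supNorm_le (N : ModuleNorm Q V) {S : Type} (f : boundedFns N S) {C : ℝ} (hC0 : 0 ≤ C)
    (hC : ∀ s, N.nrm ((f : S → V) s) ≤ C) : (supNorm N S).nrm f ≤ C :=
  Real.sSup_le (by rintro x ⟨s, rfl⟩; exact hC s) hC0

/-- Pullback along a bijection `A × B ≃ S` followed by currying, as a linear isomorphism
`ℓ∞(S, V) ≃ ℓ∞(A, ℓ∞(B, V))`. -/
def curryBounded (N : ModuleNorm Q V) {A B S : Type} (φ : A × B ≃ S) :
    boundedFns N S ≃ₗ[Q] boundedFns (supNorm N B) A where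
  toFun f := ⟨fun a => ⟨fun b => (f : S → V) (φ (a, b)), by
      obtain ⟨C, hC⟩ := f.2
      exact ⟨C, fun b => hC _⟩⟩, by
    obtain ⟨C, hC⟩ := f.2
    exact ⟨max C 0, fun a => supNorm_le N _ (le_max_right _ _)
      fun b => (hC _).trans (le_max_left _ _)⟩⟩
  map_add' _ _ := rfl
  map_smul' _ _ := rfl
  invFun F := ⟨fun x => ((F : A → boundedFns N B) (φ.symm x).1 : B → V) (φ.symm x).2, by
    obtain ⟨C, hC⟩ := F.2
    exact ⟨C, fun x => (nrm_le_supNorm N _ _).trans (hC _)⟩⟩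
  left_inv f := by
    ext x
    simp
  right_inv F := by
    ext a b
    simp

/-- for `H ≤ G` and a normed `R`-module `W` (`ℤ ⊆ R ⊆ ℝ`), there is an
`H`-equivariant `R`-linear isomorphism `ℓ∞(G,W) ≅ ℓ∞(H, ℓ∞(H\G, W))`, where `H\G` is the
set of right cosets, the inner module carries the supremum norm and the trivial `H`-action,
and `H` acts by left translation on `ℓ∞(G,W)` and on `ℓ∞(H,−)`. -/
theorem stmt_11 (Q : Subring ℝ) (W : Type) [AddCommGroup W] [Module Q W]
    (N : ModuleNorm Q W) (G : Type) [Group G] (H : Subgroup G) :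
    ∃ e : boundedFns N G ≃ₗ[Q]
        boundedFns (supNorm N (Quotient (QuotientGroup.rightRel H))) (H : Type),
      ∀ (h : H) (f : boundedFns N G),
        e (lTranslateSub N h f) =
          lTranslate (supNorm N (Quotient (QuotientGroup.rightRel H))) h (e f) := by
  refine ⟨curryBounded N (cosetDecomp H), fun h f => ?_⟩
  ext k c
  change (f : G → W) ((h : G)⁻¹ * ((k : G) * c.out)) =
    (f : G → W) (((h⁻¹ * k : H) : G) * c.out)
  simp [mul_assoc]
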